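/- Set c = π/√12. The total number q(E) of partitions of E into distinct positive integer parts satisfies q(E) · 4 · 3^{1/4} · E^{3/4} · exp(-2c√E) → 1 as E → ∞. -/

import Mathlib

open Filter

/-- `qd E`: the number of partitions of `E` into distinct positive integer parts
(any number of parts). -/
def qd (E : ℕ) : ℕ := (Nat.Partition.distincts E).card

/-- `c = π / √12`, so that `c² = π²/12`. -/
noncomputable def c : ℝ := Real.pi / Real.sqrt 12

/-- alternating zeta(2) -/
lemma alt_zeta : HasSum (fun j : ℕ => (-1:ℝ)^j / ((j:ℝ)+1)^2) (Real.pi^2/12) := by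
  have h0 := hasSum_zeta_two
  have h1 : HasSum (fun j : ℕ => 1/((j:ℝ)+1)^2) (Real.pi^2/6) := by
    have := (hasSum_nat_add_iff' (f := fun n : ℕ => 1/(n:ℝ)^2) 1).mpr h0
    simpa using this
  have h2 : HasSum (fun m : ℕ => 1/(((2*m+1:ℕ):ℝ)+1)^2) (Real.pi^2/24) := by
    have := h1.mul_left (1/4)
    rw [show Real.pi^2/24 = 1/4 * (Real.pi^2/6) by ring]
    refine Eq.subst (motive := fun g => HasSum g (1/4 * (Real.pi^2/6))) ?_ this
    funext m
    symm
    push_cast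
    rw [show (2*(m:ℝ)+1+1) = 2*(m+1) by ring, mul_pow]
    field_simp
    norm_num
  have hs : Summable (fun m : ℕ => 1/(((2*m:ℕ):ℝ)+1)^2) :=
    h1.summable.comp_injective (i := fun m : ℕ => 2*m) (fun a b h => by simpa using h)
  have h3 := HasSum.even_add_odd (f := fun j : ℕ => 1/((j:ℝ)+1)^2) hs.hasSum h2
  have h4 := h3.unique h1
  have h5 : HasSum (fun m : ℕ => 1/(((2*m:ℕ):ℝ)+1)^2) (Real.pi^2/8) := by
    have := hs.hasSum
    rwa [show (∑' m : ℕ, 1/(((2*m:ℕ):ℝ)+1)^2) = Real.pi^2/8 by linarith] at this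
  have h6 := HasSum.even_add_odd (f := fun j : ℕ => (-1:ℝ)^j / ((j:ℝ)+1)^2)
    (m := Real.pi^2/8) (m' := -(Real.pi^2/24))
    (by simpa [pow_mul] using h5) (by simpa [pow_mul, pow_succ, neg_div] using h2.neg)
  rwa [show Real.pi^2/8 + -(Real.pi^2/24) = Real.pi^2/12 by ring] at h6

lemma trap (f f' f'' : ℝ → ℂ) (a M : ℝ) (h1 : ∀ x ∈ Set.Icc a (a+1), HasDerivAt f (f' x) x)
    (h2 : ∀ x ∈ Set.Icc a (a+1), HasDerivAt f' (f'' x) x)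
    (h3 : ContinuousOn f'' (Set.Icc a (a+1)))
    (hM : ∀ x ∈ Set.Icc a (a+1), ‖f'' x‖ ≤ M) :
    ‖(f a + f (a+1))/2 - ∫ x in a..(a+1), f x‖ ≤ M/8 := by
  have hu : Set.uIcc a (a+1) = Set.Icc a (a+1) := Set.uIcc_of_le (by linarith)
  have hf : ContinuousOn f (Set.Icc a (a+1)) := fun x hx => (h1 x hx).continuousAt.continuousWithinAt
  set P : ℝ → ℂ := fun x => ((((x-a)*(x-a-1)/2 : ℝ)) : ℂ) with hP
  have hPc : Continuous P := by fun_prop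
  have hi1 : IntervalIntegrable (fun x => P x * f'' x) MeasureTheory.volume a (a+1) := by
    apply ContinuousOn.intervalIntegrable
    rw [hu]; exact hPc.continuousOn.mul h3
  have hi2 : IntervalIntegrable f MeasureTheory.volume a (a+1) := by
    apply ContinuousOn.intervalIntegrable
    rwa [hu]
  have key := intervalIntegral.integral_eq_sub_of_hasDerivAt (a := a) (b := a+1)
    (f := fun x => P x * f' x - (((x-a-1/2 : ℝ)):ℂ) * f x)
    (f' := fun x => P x * f'' x - f x) (by
      intro x hx
      rw [hu] at hx
      have d1 : HasDerivAt P ((((x-a-1/2 : ℝ)):ℂ)) x := by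
        apply HasDerivAt.ofReal_comp
        have := ((((hasDerivAt_id x).sub_const a).mul (((hasDerivAt_id x).sub_const a).sub_const 1)).div_const 2)
        refine this.congr_deriv ?_
        simp only [id]; ring
      have d2 : HasDerivAt (fun x : ℝ => (((x-a-1/2 : ℝ)):ℂ)) ((1:ℝ):ℂ) x := by
        apply HasDerivAt.ofReal_comp
        exact ((hasDerivAt_id x).sub_const a).sub_const (1/2)
      have := (d1.mul (h2 x hx)).sub (d2.mul (h1 x hx))
      refine this.congr_deriv ?_
      push_cast; ring) (hi1.sub hi2)
  rw [intervalIntegral.integral_sub hi1 hi2] at key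
  have e : (f a + f (a+1))/2 - ∫ x in a..(a+1), f x = - ∫ x in a..(a+1), P x * f'' x := by
    have : (∫ x in a..(a+1), P x * f'' x) - ∫ x in a..(a+1), f x = -(f a + f (a+1))/2 := by
      rw [key]; simp [hP]; ring
    linear_combination this
  rw [e, norm_neg]
  have := intervalIntegral.norm_integral_le_of_norm_le_const (a := a) (b := a+1) (C := M/8)
    (f := fun x => P x * f'' x) (by
      intro x hx
      rw [Set.uIoc_of_le (by linarith)] at hx
      have hx' : x ∈ Set.Icc a (a+1) := ⟨hx.1.le, hx.2⟩
      rw [norm_mul]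
      have hp : ‖P x‖ ≤ 1/8 := by
        simp only [hP, Complex.norm_real, Real.norm_eq_abs]
        rw [abs_le]; constructor <;> nlinarith [sq_nonneg (x-a-1/2), hx'.1, hx'.2, mul_nonneg (sub_nonneg.2 hx'.1) (sub_nonneg.2 hx'.2)]
      calc ‖P x‖ * ‖f'' x‖ ≤ 1/8 * M := by gcongr; exact hM x hx'
        _ = M/8 := by ring)
  simpa using this

/-- Re(1+e^{-y}) > 0 stuff -/
lemma slit_aux (w : ℂ) (hw : 0 < w.re) (x : ℝ) (hx : 0 ≤ x) :
    1 + Complex.exp (-w * x) ∈ Complex.slitPlane := by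
  rcases hx.eq_or_lt with h | h
  · subst h
    simp only [Complex.ofReal_zero, mul_zero, Complex.exp_zero]
    left; norm_num
  · left
    have h1 : ‖Complex.exp (-w * x)‖ < 1 := by
      rw [Complex.norm_exp, Real.exp_lt_one_iff]
      simp; positivity
    have h2 := Complex.abs_re_le_norm (Complex.exp (-w * x))
    have h3 := neg_abs_le (Complex.exp (-w * x)).re
    rw [Complex.add_re, Complex.one_re]
    linarith

lemma norm_exp_aux (w : ℂ) (x : ℝ) : ‖Complex.exp (-w * x)‖ = Real.exp (-(w.re * x)) := by
  rw [Complex.norm_exp]; simp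

lemma lower_aux (w : ℂ) (hw : 0 < w.re) (him : |w.im| ≤ w.re) (x : ℝ) (hx : 0 ≤ x) :
    1/2 ≤ ‖1 + Complex.exp (-w * x)‖ := by
  by_cases h : w.re * x ≤ 1
  · have h1 : 0 ≤ (Complex.exp (-w * x)).re := by
      rw [Complex.exp_re]
      apply mul_nonneg (Real.exp_pos _).le
      apply Real.cos_nonneg_of_mem_Icc
      have h2 : (-w * x).im = -(w.im * x) := by simp
      have h3 : |w.im * x| ≤ 1 := by
        rw [abs_mul, abs_of_nonneg hx]
        exact le_trans (by gcongr) h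
      have := abs_le.1 h3
      have := Real.pi_gt_three
      rw [h2]; constructor <;> linarith
    have h2 := Complex.re_le_norm (1 + Complex.exp (-w * x))
    rw [Complex.add_re, Complex.one_re] at h2
    linarith
  · push Not at h
    have h1 : ‖Complex.exp (-w * x)‖ ≤ 1/2 := by
      rw [norm_exp_aux]
      have : Real.exp (-(w.re * x)) ≤ Real.exp (-1) := Real.exp_le_exp.2 (by linarith)
      have := Real.exp_neg_one_lt_half
      linarith
    have := norm_sub_le_norm_add (1:ℂ) (Complex.exp (-w * x))
    rw [norm_one] at this
    linarith

lemma deriv1 (w : ℂ) (hw : 0 < w.re) (x : ℝ) (hx : 0 ≤ x) :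
    HasDerivAt (fun x : ℝ => Complex.log (1 + Complex.exp (-w * x)))
      (-w * Complex.exp (-w * x) / (1 + Complex.exp (-w * x))) x := by
  have h0 : HasDerivAt (fun x : ℝ => -w * (x:ℂ)) (-w) x := by
    simpa using (Complex.ofRealCLM.hasDerivAt (x := x)).const_mul (-w)
  have h1 : HasDerivAt (fun x : ℝ => 1 + Complex.exp (-w * x)) (-w * Complex.exp (-w * x)) x := by
    refine (h0.cexp.const_add 1).congr_deriv ?_
    ring
  exact h1.clog_real (slit_aux w hw x hx)

lemma deriv2 (w : ℂ) (hw : 0 < w.re) (x : ℝ) (hx : 0 ≤ x) :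
    HasDerivAt (fun x : ℝ => -w * Complex.exp (-w * x) / (1 + Complex.exp (-w * x)))
      (w^2 * Complex.exp (-w * x) / (1 + Complex.exp (-w * x))^2) x := by
  have h0 : HasDerivAt (fun x : ℝ => -w * (x:ℂ)) (-w) x := by
    simpa using (Complex.ofRealCLM.hasDerivAt (x := x)).const_mul (-w)
  have hne := Complex.slitPlane_ne_zero (slit_aux w hw x hx)
  refine ((h0.cexp.const_mul (-w)).div (h0.cexp.const_add 1) hne).congr_deriv ?_
  field_simp
  ring

lemma trap_one (w : ℂ) (hw : 0 < w.re) (him : |w.im| ≤ w.re) (k : ℕ) :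
    ‖(Complex.log (1 + Complex.exp (-w * k)) + Complex.log (1 + Complex.exp (-w * (k+1))))/2
      - ∫ x in (k:ℝ)..(k+1), Complex.log (1 + Complex.exp (-w * x))‖
      ≤ w.re^2 * Real.exp (-w.re) ^ k := by
  have hk : (0:ℝ) ≤ k := Nat.cast_nonneg k
  have h := trap (fun x : ℝ => Complex.log (1 + Complex.exp (-w * x)))
    (fun x : ℝ => -w * Complex.exp (-w * x) / (1 + Complex.exp (-w * x)))
    (fun x : ℝ => w^2 * Complex.exp (-w * x) / (1 + Complex.exp (-w * x))^2) k
    (8 * w.re^2 * Real.exp (-w.re) ^ k)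
    (fun x hx => deriv1 w hw x (hk.trans hx.1))
    (fun x hx => deriv2 w hw x (hk.trans hx.1))
    (by
      apply ContinuousOn.div (by fun_prop) (by fun_prop)
      intro x hx
      exact pow_ne_zero _ (Complex.slitPlane_ne_zero (slit_aux w hw x (hk.trans hx.1))))
    (by
      intro x hx
      rw [norm_div, norm_mul, norm_pow, norm_pow, norm_exp_aux]
      have h1 := lower_aux w hw him x (hk.trans hx.1)
      have h2 : ‖w‖^2 ≤ 2 * w.re^2 := by
        rw [Complex.sq_norm, Complex.normSq_apply]
        have := sq_le_sq' (by linarith [neg_abs_le w.im]) (le_of_abs_le him)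
        nlinarith
      have h3 : Real.exp (-(w.re * x)) ≤ Real.exp (-w.re) ^ k := by
        rw [← Real.exp_nat_mul, Real.exp_le_exp]
        nlinarith [hx.1]
      have h4 : (1/4 : ℝ) ≤ ‖1 + Complex.exp (-w * x)‖^2 := by nlinarith
      rw [div_le_iff₀ (by linarith)]
      calc ‖w‖^2 * Real.exp (-(w.re * x)) ≤ (2 * w.re^2) * Real.exp (-w.re) ^ k := by gcongr
        _ = 8 * w.re^2 * Real.exp (-w.re) ^ k * (1/4) := by ring
        _ ≤ _ := by gcongr)
  push_cast at h
  refine h.trans (le_of_eq ?_)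
  ring

lemma int_eval (w : ℂ) (hw : 0 < w.re) (N : ℕ) :
    ‖(∫ x in (0:ℝ)..N, Complex.log (1 + Complex.exp (-w * x))) - (Real.pi^2/12 : ℝ) / w‖
      ≤ Real.exp (-(w.re * N)) / ‖w‖ * 2 := by
  have hw0 : w ≠ 0 := by rintro rfl; simp at hw
  have hterm : ∀ j : ℕ, ∫ x in (0:ℝ)..N, (-1:ℂ)^j * Complex.exp (-w * x) ^ (j+1) / ((j:ℂ)+1)
      = (((-1:ℝ)^j / ((j:ℝ)+1)^2 : ℝ) : ℂ) / w
        - (-1:ℂ)^j * Complex.exp (-w * N)^(j+1) / ((j:ℂ)+1)^2 / w := by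
    intro j
    have hj : ((j:ℂ)+1) ≠ 0 := by exact_mod_cast Nat.succ_ne_zero j
    have : ∀ x : ℝ, (-1:ℂ)^j * Complex.exp (-w * x) ^ (j+1) / ((j:ℂ)+1)
        = ((-1:ℂ)^j / ((j:ℂ)+1)) * Complex.exp ((-w * (j+1)) * x) := by
      intro x
      rw [← Complex.exp_nat_mul]
      push_cast
      rw [show ((j:ℂ)+1) * (-w * x) = (-w * (j+1)) * x by ring]
      ring
    simp_rw [this]
    rw [intervalIntegral.integral_const_mul, integral_exp_mul_complex (by simp [hw0, hj])]
    rw [← Complex.exp_nat_mul]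
    push_cast
    rw [show ((j:ℂ)+1) * (-w * N) = (-w * (j+1)) * N by ring]
    simp only [mul_zero, Complex.exp_zero]
    field_simp
    ring
  have hsum : Summable (fun j : ℕ => 1/((j:ℝ)+1)^2) := by
    have := (summable_nat_add_iff 1).mpr hasSum_zeta_two.summable
    simpa using this
  have hn : ∀ (j : ℕ) (x : ℝ), ‖(-1:ℂ)^j * Complex.exp (-w * x) ^ (j+1) / ((j:ℂ)+1)‖
      = Real.exp (-(w.re * x)) ^ (j+1) / ((j:ℝ)+1) := by
    intro j x
    rw [norm_div, norm_mul, norm_pow, norm_pow, norm_exp_aux, norm_neg, norm_one, one_pow, one_mul]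
    congr 1
    have : ((j:ℂ)+1) = ((j+1:ℕ):ℂ) := by push_cast; rfl
    rw [this, Complex.norm_natCast]; push_cast; rfl
  have hN : (0:ℝ) ≤ N := Nat.cast_nonneg N
  have hint : HasSum (fun j : ℕ => ∫ x in (0:ℝ)..N, (-1:ℂ)^j * Complex.exp (-w * x) ^ (j+1) / ((j:ℂ)+1))
      (∫ x in (0:ℝ)..N, Complex.log (1 + Complex.exp (-w * x))) := by
    simp only [intervalIntegral.integral_of_le hN]
    have h := MeasureTheory.hasSum_integral_of_summable_integral_norm
      (μ := MeasureTheory.volume.restrict (Set.Ioc (0:ℝ) N))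
      (F := fun (j : ℕ) (x : ℝ) => (-1:ℂ)^j * Complex.exp (-w * x) ^ (j+1) / ((j:ℂ)+1))
      (by
        intro j
        have : Continuous (fun (x : ℝ) => (-1:ℂ)^j * Complex.exp (-w * x) ^ (j+1) / ((j:ℂ)+1)) := by
          fun_prop
        exact this.integrableOn_Ioc)
      (by
        refine Summable.of_nonneg_of_le (fun j => MeasureTheory.integral_nonneg (fun _ => norm_nonneg _)) ?_
          (hsum.mul_left (1/w.re))
        intro j
        simp_rw [hn]
        rw [← intervalIntegral.integral_of_le hN]
        have e : ∀ x : ℝ, Real.exp (-(w.re * x)) ^ (j+1) / ((j:ℝ)+1)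
          = (1/((j:ℝ)+1)) * Real.exp ((-(w.re * (j+1))) * x) := by
          intro x
          rw [← Real.exp_nat_mul]
          push_cast
          rw [show ((j:ℝ)+1) * (-(w.re * x)) = (-(w.re * (j+1))) * x by ring]
          ring
        simp_rw [e]
        have hp : 0 < w.re * ((j:ℝ)+1) := by positivity
        rw [intervalIntegral.integral_const_mul, intervalIntegral.integral_comp_mul_left (f := Real.exp) (by linarith), integral_exp]
        simp only [mul_zero, Real.exp_zero, smul_eq_mul]
        have := Real.exp_pos (-(w.re * (j+1)) * N)
        have e2 : 1/((j:ℝ)+1) * ((-(w.re * (j+1)))⁻¹ * (Real.exp (-(w.re * (j+1)) * N) - 1))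
          = (1/w.re * (1/((j:ℝ)+1)^2)) * (1 - Real.exp (-(w.re * (j+1)) * N)) := by
          field_simp
          ring
        rw [e2]
        apply mul_le_of_le_one_right (by positivity)
        linarith)
    refine Eq.subst (motive := fun g => HasSum _ g) ?_ h
    apply MeasureTheory.setIntegral_congr_fun measurableSet_Ioc
    intro x hx
    have h1 : ‖Complex.exp (-w * x)‖ < 1 := by
      rw [norm_exp_aux, Real.exp_lt_one_iff]
      have := mul_pos hw hx.1
      linarith
    have h2 := Complex.hasSum_taylorSeries_log h1
    have h3 := (hasSum_nat_add_iff' 1).mpr h2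
    simp only [Finset.range_one, Finset.sum_singleton, Nat.cast_zero, div_zero, sub_zero] at h3
    refine Eq.trans ?_ h3.tsum_eq
    apply tsum_congr
    intro j
    push_cast
    rw [pow_add (-1:ℂ) _ 1, pow_add (-1:ℂ) _ 1]
    ring
  simp_rw [hterm] at hint
  have halt : HasSum (fun j : ℕ => (((-1:ℝ)^j / ((j:ℝ)+1)^2 : ℝ) : ℂ) / w) ((Real.pi^2/12 : ℝ) / w) :=
    ((Complex.hasSum_ofReal).mpr alt_zeta).div_const w
  have hd := hint.sub halt
  rw [← hd.tsum_eq]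
  have hsum2 : HasSum (fun j : ℕ => Real.exp (-(w.re * N)) / ‖w‖ * (1/((j:ℝ)+1)^2))
     (Real.exp (-(w.re * N)) / ‖w‖ * (Real.pi^2/6)) := by
    apply HasSum.mul_left
    have := (hasSum_nat_add_iff' 1).mpr hasSum_zeta_two
    simpa using this
  refine (tsum_of_norm_bounded hsum2 ?_).trans ?_
  · intro j
    rw [sub_sub_cancel_left, norm_neg, norm_div, norm_div, norm_mul, norm_pow, norm_neg, norm_one, one_pow,
      one_mul, norm_pow, norm_pow]
    have e1 : ‖(j:ℂ)+1‖ = (j:ℝ)+1 := by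
      have : ((j:ℂ)+1) = ((j+1:ℕ):ℂ) := by push_cast; rfl
      rw [this, Complex.norm_natCast]; push_cast; rfl
    have e2 : ‖Complex.exp (-w * N)‖ = Real.exp (-(w.re * N)) := by
      have := norm_exp_aux w N
      push_cast at this
      exact this
    rw [e1, e2]
    have : Real.exp (-(w.re * N)) ^ (j+1) ≤ Real.exp (-(w.re * N)) := by
      apply pow_le_of_le_one (Real.exp_pos _).le _ (by omega)
      rw [Real.exp_le_one_iff]
      have := mul_nonneg hw.le hN
      linarith
    calc _ ≤ Real.exp (-(w.re * N)) / ((j:ℝ)+1)^2 / ‖w‖ := by gcongr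
      _ = _ := by ring
  · gcongr
    have := Real.pi_lt_d2
    nlinarith [Real.pi_pos]

lemma logsum (w : ℂ) (hw : 0 < w.re) (him : |w.im| ≤ w.re) (N : ℕ) (hN : 1 ≤ w.re * N) :
    ‖(∑ k ∈ Finset.range N, Complex.log (1 + Complex.exp (-w * (k+1))))
      - ((Real.pi^2/12 : ℝ) / w - Complex.log 2 / 2)‖
      ≤ w.re * (1 + w.re) + Real.exp (-(w.re * N)) * (2 / w.re + 1) := by
  set g : ℝ → ℂ := fun x => Complex.log (1 + Complex.exp (-w * x)) with hg
  have htel : ∀ M : ℕ, (∑ k ∈ Finset.range M, Complex.log (1 + Complex.exp (-w * (k+1))))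
      = (∑ k ∈ Finset.range M, (Complex.log (1 + Complex.exp (-w * k))
          + Complex.log (1 + Complex.exp (-w * (k+1))))/2)
        + (Complex.log (1 + Complex.exp (-w * M)) - Complex.log 2)/2 := by
    intro M
    induction M with
    | zero => simp; norm_num
    | succ m ih =>
      rw [Finset.sum_range_succ, Finset.sum_range_succ, ih]
      push_cast
      ring
  have hii : ∀ k : ℕ, k < N → IntervalIntegrable g MeasureTheory.volume (k:ℝ) ((k+1 : ℕ):ℝ) := by
    intro k _
    apply ContinuousOn.intervalIntegrable
    intro x hx
    rw [Set.uIcc_of_le (by push_cast; linarith)] at hx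
    exact (deriv1 w hw x ((Nat.cast_nonneg k).trans hx.1)).continuousAt.continuousWithinAt
  have hint := intervalIntegral.sum_integral_adjacent_intervals (a := fun k : ℕ => (k:ℝ)) (n := N) hii
  simp only [Nat.cast_zero] at hint
  have h1 : ‖∑ k ∈ Finset.range N, ((Complex.log (1 + Complex.exp (-w * k))
          + Complex.log (1 + Complex.exp (-w * (k+1))))/2 - ∫ x in (k:ℝ)..((k+1:ℕ):ℝ), g x)‖
      ≤ w.re * (1 + w.re) := by
    refine (norm_sum_le_of_le (f := fun k : ℕ => ((Complex.log (1 + Complex.exp (-w * k))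
          + Complex.log (1 + Complex.exp (-w * (k+1))))/2 - ∫ x in (k:ℝ)..((k+1:ℕ):ℝ), g x))
        (n := fun k => w.re^2 * Real.exp (-w.re) ^ k) _ (fun k _ => ?_)).trans ?_
    · have := trap_one w hw him k
      push_cast
      exact this
    · rw [← Finset.mul_sum]
      have he : Real.exp (-w.re) < 1 := by rw [Real.exp_lt_one_iff]; linarith
      have h2 : ∑ k ∈ Finset.range N, Real.exp (-w.re) ^ k ≤ (1 - Real.exp (-w.re))⁻¹ := by
        rw [← tsum_geometric_of_lt_one (Real.exp_pos _).le he]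
        exact (summable_geometric_of_lt_one (Real.exp_pos _).le he).sum_le_tsum _
          (fun _ _ => by positivity)
      have h3 : (1 - Real.exp (-w.re))⁻¹ ≤ (1 + w.re) / w.re := by
        rw [inv_le_comm₀ (by linarith) (by positivity), inv_div]
        have : Real.exp (-w.re) ≤ 1 / (1 + w.re) := by
          rw [Real.exp_neg, one_div]
          apply inv_anti₀ (by linarith)
          linarith [Real.add_one_le_exp w.re]
        have e : w.re / (1 + w.re) = 1 - 1 / (1 + w.re) := by field_simp; ring
        linarith
      calc _ ≤ w.re^2 * ((1 + w.re) / w.re) := by gcongr; exact h2.trans h3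
        _ = _ := by field_simp
  rw [Finset.sum_sub_distrib, hint] at h1
  have h2 := int_eval w hw N
  have h3 : ‖Complex.log (1 + Complex.exp (-w * N))‖ ≤ 3/2 * Real.exp (-(w.re * N)) := by
    have e2 : ‖Complex.exp (-w * N)‖ = Real.exp (-(w.re * N)) := by
      have := norm_exp_aux w N
      push_cast at this
      exact this
    rw [← e2]
    apply Complex.norm_log_one_add_half_le_self
    rw [e2]
    have : Real.exp (-(w.re * N)) ≤ Real.exp (-1) := Real.exp_le_exp.2 (by linarith)
    have := Real.exp_neg_one_lt_half
    linarith
  rw [htel]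
  set A := (∑ k ∈ Finset.range N, (Complex.log (1 + Complex.exp (-w * k))
          + Complex.log (1 + Complex.exp (-w * (k+1))))/2)
  set I0 := ∫ x in (0:ℝ)..N, g x
  have e : A + (Complex.log (1 + Complex.exp (-w * N)) - Complex.log 2)/2
      - ((Real.pi^2/12 : ℝ) / w - Complex.log 2 / 2)
      = (A - I0) + (I0 - (Real.pi^2/12 : ℝ) / w) + Complex.log (1 + Complex.exp (-w * N))/2 := by
    ring
  rw [e]
  have hwn : w.re ≤ ‖w‖ := Complex.re_le_norm w
  calc _ ≤ ‖A - I0‖ + ‖I0 - (Real.pi^2/12 : ℝ) / w‖ + ‖Complex.log (1 + Complex.exp (-w * N))/2‖ :=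
        norm_add₃_le
    _ ≤ w.re * (1 + w.re) + Real.exp (-(w.re * N)) / w.re * 2 + 3/2 * Real.exp (-(w.re * N)) / 2 := by
        gcongr
        · refine h2.trans ?_
          gcongr
        · rw [norm_div]
          gcongr
          simp
    _ ≤ _ := by
        have := Real.exp_pos (-(w.re * N))
        have e3 : Real.exp (-(w.re * N)) / w.re * 2 = Real.exp (-(w.re * N)) * (2 / w.re) := by ring
        rw [e3]
        nlinarith


lemma c_pos : 0 < c := by unfold c; positivity

lemma c_sq : c^2 = Real.pi^2/12 := by
  unfold c
  rw [div_pow, Real.sq_sqrt (by norm_num)]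

lemma c_le_one : c ≤ 1 := by
  have h := c_sq
  have := Real.pi_lt_d2
  have := Real.pi_pos
  have := c_pos
  nlinarith

/-- fourth root of `n` -/
noncomputable def rr (n : ℕ) : ℝ := (n:ℝ)^((1:ℝ)/4)

lemma rr_pow (n : ℕ) : rr n ^ 4 = n := by
  unfold rr
  rw [← Real.rpow_natCast, ← Real.rpow_mul (by positivity)]
  norm_num

lemma rr_nonneg (n : ℕ) : 0 ≤ rr n := by unfold rr; positivity

lemma rr_tendsto : Tendsto rr atTop atTop :=
  (tendsto_rpow_atTop (by norm_num)).comp tendsto_natCast_atTop_atTop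

lemma one_le_rr (n : ℕ) (hn : 1 ≤ n) : 1 ≤ rr n :=
  Real.one_le_rpow (by exact_mod_cast hn) (by norm_num)

/-- saddle point variable -/
noncomputable def ww (n : ℕ) (u : ℝ) : ℂ := ⟨c / rr n ^ 2, -(u / rr n ^ 3)⟩

/-- integrand -/
noncomputable def G (n : ℕ) (u : ℝ) : ℂ :=
  (∏ k ∈ Finset.range n, (1 + Complex.exp (-ww n u * (k+1)))) * Complex.exp (n * ww n u)
    * Complex.exp (-(2 * c * rr n ^ 2))

lemma G_tendsto (u : ℝ) : Tendsto (fun n => G n u) atTop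
    (nhds (Complex.exp (-(u^2/c)) * Complex.exp (- (Complex.log 2 / 2)))) := by
  have hc := c_pos
  have hr := rr_tendsto
  have hsum : Tendsto (fun n : ℕ => (∑ k ∈ Finset.range n, Complex.log (1 + Complex.exp (-ww n u * (k+1))))
      - ((Real.pi^2/12 : ℝ) / ww n u - Complex.log 2 / 2)) atTop (nhds 0) := by
    apply squeeze_zero_norm' (a := fun n => (c / rr n ^ 2) * (1 + c / rr n ^ 2)
      + Real.exp (-(c * rr n ^ 2)) * (2 / c ^ 2 * (c * rr n ^2) + 1))
    · filter_upwards [hr.eventually_ge_atTop 1, hr.eventually_ge_atTop (|u|/c), hr.eventually_ge_atTop (1/c)]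
        with n h1 h2 h3
      have hp : 0 < rr n := by linarith
      have hre : (ww n u).re = c / rr n ^ 2 := rfl
      have hrn : (ww n u).re * n = c * rr n ^ 2 := by
        rw [hre, ← rr_pow n]
        field_simp
      have := logsum (ww n u) (by rw [hre]; positivity) (by
        rw [hre]
        simp only [ww]
        rw [abs_neg, abs_div, abs_of_pos (pow_pos hp 3), div_le_div_iff₀ (by positivity) (by positivity)]
        rw [div_le_iff₀ hc] at h2
        calc |u| * rr n ^2 ≤ (rr n * c) * rr n ^ 2 := by gcongr
          _ = _ := by ring) n (by
        rw [hrn]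
        rw [div_le_iff₀ hc] at h3
        nlinarith)
      refine this.trans (le_of_eq ?_)
      rw [hrn, hre]
      congr 3
      field_simp
    · have hr2 : Tendsto (fun n => rr n ^ 2) atTop atTop := (tendsto_pow_atTop (by norm_num)).comp hr
      have ht : Tendsto (fun n => c / rr n ^ 2) atTop (nhds 0) := hr2.const_div_atTop c
      have hx : Tendsto (fun n => c * rr n ^ 2) atTop atTop := hr2.const_mul_atTop hc
      have h4 : Tendsto (fun x : ℝ => Real.exp (-x) * (2 / c^2 * x + 1)) atTop (nhds 0) := by
        have a1 := (Real.tendsto_pow_mul_exp_neg_atTop_nhds_zero 1).const_mul (2/c^2)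
        have a2 := Real.tendsto_exp_neg_atTop_nhds_zero
        have := a1.add a2
        simp only [mul_zero, add_zero] at this
        refine this.congr (fun x => ?_)
        ring
      have := (ht.mul (ht.const_add 1)).add (h4.comp hx)
      simpa using this
  have hquad : Tendsto (fun n : ℕ => (Real.pi^2/12 : ℝ) / ww n u + n * ww n u - 2 * c * rr n ^ 2) atTop
      (nhds (-((u:ℂ)^2/c))) := by
    have h1 : Tendsto (fun n : ℕ => (1 - Complex.I * (((u / c / rr n : ℝ)) : ℂ))) atTop (nhds 1) := by
      have : Tendsto (fun n => (u/c) / rr n) atTop (nhds 0) := hr.const_div_atTop _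
      have := ((Complex.continuous_ofReal.tendsto 0).comp this).const_mul Complex.I
      have := this.const_sub 1
      simpa using this
    have h2 := (h1.inv₀ one_ne_zero).const_mul (-(u^2/c) : ℂ)
    rw [inv_one, mul_one] at h2
    refine h2.congr' ?_
    filter_upwards [hr.eventually_ge_atTop 1] with n hn
    have hp : 0 < rr n := by linarith
    have hww : ww n u = (c / rr n ^ 2 : ℝ) * (1 - Complex.I * (((u / c / rr n : ℝ)):ℂ)) := by
      apply Complex.ext
      · simp only [ww, Complex.re_ofReal_mul]
        simp
      · simp only [ww, Complex.im_ofReal_mul]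
        simp
        field_simp
    have hne : (1 - Complex.I * (((u / c / rr n : ℝ)) : ℂ)) ≠ 0 := by
      intro h
      have := congrArg Complex.re h
      simp at this
    rw [hww, ← c_sq]
    have hnn : (n:ℂ) = (rr n : ℂ)^4 := by
      rw [← Complex.ofReal_pow, rr_pow]; simp
    rw [hnn]
    set s : ℝ := u / c / rr n with hs
    have hu : u = s * c * rr n := by rw [hs]; field_simp
    rw [hu]
    have hcc : (c:ℂ) ≠ 0 := by exact_mod_cast hc.ne'
    have hrc : (rr n:ℂ) ≠ 0 := by exact_mod_cast hp.ne'
    have hI : Complex.I ^2 = -1 := Complex.I_sq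
    obtain ⟨d, hd⟩ : ∃ d : ℂ, d = 1 - Complex.I * (s:ℂ) := ⟨_, rfl⟩
    rw [← hd] at hne ⊢
    push_cast
    field_simp
    linear_combination (1 - d + Complex.I * s) * hd - (s:ℂ)^2 * hI
  have htot := (hsum.add hquad).sub_const (Complex.log 2 / 2)
  have hexp := (Complex.continuous_exp.tendsto _).comp htot
  rw [zero_add, sub_eq_add_neg, Complex.exp_add] at hexp
  refine hexp.congr' ?_
  filter_upwards [hr.eventually_ge_atTop 1] with n hn
  have hp : 0 < rr n := by linarith
  have hprod : (∏ k ∈ Finset.range n, (1 + Complex.exp (-ww n u * (k+1))))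
      = Complex.exp (∑ k ∈ Finset.range n, Complex.log (1 + Complex.exp (-ww n u * (k+1)))) := by
    rw [Complex.exp_sum]
    apply Finset.prod_congr rfl
    intro k _
    rw [Complex.exp_log]
    have := Complex.slitPlane_ne_zero (slit_aux (ww n u) (by simp only [ww]; positivity) ((k:ℝ)+1) (by positivity))
    push_cast at this
    exact this
  simp only [Function.comp, G]
  rw [hprod, ← Complex.exp_add, ← Complex.exp_add]
  congr 1
  ring

lemma factor_bound (a x : ℝ) (ha : 0 ≤ a) (ha1 : a ≤ 1) :
    ‖1 + (a:ℂ) * Complex.exp (x * Complex.I)‖ ≤ (1 + a) * Real.exp (-(a * (1 - Real.cos x))/4) := by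
  apply le_of_sq_le_sq _ (by positivity)
  have h1 : ‖1 + (a:ℂ) * Complex.exp (x * Complex.I)‖^2 = (1+a)^2 - 2*a*(1 - Real.cos x) := by
    rw [Complex.sq_norm, Complex.normSq_apply]
    have hre : (1 + (a:ℂ) * Complex.exp (x * Complex.I)).re = 1 + a * Real.cos x := by
      simp [Complex.exp_ofReal_mul_I_re]
    have him : (1 + (a:ℂ) * Complex.exp (x * Complex.I)).im = a * Real.sin x := by
      simp [Complex.exp_ofReal_mul_I_im]
    rw [hre, him]
    nlinarith [Real.sin_sq_add_cos_sq x]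
  rw [h1, mul_pow, ← Real.exp_nat_mul]
  have h2 := Real.add_one_le_exp (((2:ℕ):ℝ) * (-(a * (1 - Real.cos x))/4))
  push_cast at h2 ⊢
  have h3 : 0 ≤ a * (1 - Real.cos x) := mul_nonneg ha (by linarith [Real.cos_le_one x])
  have h4 : (1+a)^2 ≤ 4 := by nlinarith
  calc (1+a)^2 - 2*a*(1 - Real.cos x) ≤ (1+a)^2 * (2 * (-(a * (1 - Real.cos x))/4) + 1) := by nlinarith
    _ ≤ _ := by gcongr

lemma min_aux (A D m : ℝ) (hA : 0 < A) (hD : 0 < D) (hm0 : 0 ≤ m) (hm1 : m ≤ 1)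
    (h : A^2 * (1 + m) ≤ D^2) : A / D ≤ 1 - m/4 := by
  rw [div_le_iff₀ hD]
  apply le_of_sq_le_sq _ (mul_nonneg (by linarith) hD.le)
  rw [mul_pow]
  have h1 : 1 ≤ (1 - m/4)^2 * (1 + m) := by nlinarith [mul_nonneg hm0 (sub_nonneg.2 hm1), pow_nonneg hm0 3]
  calc A^2 ≤ A^2 * ((1 - m/4)^2 * (1 + m)) := le_mul_of_one_le_right (by positivity) h1
    _ = (1 - m/4)^2 * (A^2 * (1 + m)) := by ring
    _ ≤ _ := by gcongr

lemma S_bound (t θ : ℝ) (n : ℕ) (ht : 0 < t) (ht1 : t ≤ 1) (hθ : |θ| ≤ Real.pi) :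
    1/(16*t) * min 1 (θ^2/(Real.pi^2 * t^2)) - 2 * Real.exp (-t)^n / t ≤
    ∑ k ∈ Finset.range n, Real.exp (-t)^(k+1) * (1 - Real.cos ((k+1)*θ)) := by
  set a := Real.exp (-t) with ha
  have ha0 : 0 < a := Real.exp_pos _
  have ha1 : a < 1 := by rw [ha, Real.exp_lt_one_iff]; linarith
  have ha4 : 1/4 ≤ a := by
    have h1 : Real.exp (-1) ≤ a := Real.exp_le_exp.2 (by linarith)
    have h2 := Real.exp_neg_one_gt_d9
    linarith
  set A := 1 - a with hA
  have hA0 : 0 < A := by linarith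
  have hAt : A ≤ t := by
    have := Real.add_one_le_exp (-t)
    linarith
  have haA : a / A ≤ 1/t := by
    rw [div_le_div_iff₀ hA0 ht]
    have h1 := Real.add_one_le_exp t
    have h2 : a * Real.exp t = 1 := by rw [ha, ← Real.exp_add]; simp
    nlinarith
  set z : ℂ := (a:ℂ) * Complex.exp (θ * Complex.I) with hz
  have hzn : ‖z‖ = a := by
    rw [hz, norm_mul, Complex.norm_exp_ofReal_mul_I, Complex.norm_real, Real.norm_of_nonneg ha0.le, mul_one]
  have hz1 : z ≠ 1 := by
    intro h; rw [h, norm_one] at hzn; linarith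
  set D := ‖z - 1‖ with hD
  have hD0 : 0 < D := norm_pos_iff.2 (sub_ne_zero.2 hz1)
  have hDA : A ≤ D := by
    have := norm_sub_norm_le (1:ℂ) z
    rw [norm_one, hzn, norm_sub_rev] at this
    exact this
  have hzk : ∀ k : ℕ, (z^(k+1)).re = a^(k+1) * Real.cos ((k+1)*θ) := by
    intro k
    rw [hz, mul_pow, ← Complex.exp_nat_mul, ← Complex.ofReal_pow, Complex.re_ofReal_mul]
    rw [show (((k+1:ℕ):ℂ)) * (θ * Complex.I) = (((k+1)*θ : ℝ):ℂ) * Complex.I by push_cast; ring,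
      Complex.exp_ofReal_mul_I_re]
  have hS : ∑ k ∈ Finset.range n, a^(k+1) * (1 - Real.cos ((k+1)*θ))
      = a * ((1 - a^n)/A) - (z * ((z^n - 1)/(z-1))).re := by
    rw [← geom_sum_eq hz1, Finset.mul_sum, Complex.re_sum]
    have : (1 - a^n)/A = ∑ k ∈ Finset.range n, a^k := by
      rw [geom_sum_eq ha1.ne, hA, ← neg_sub, ← neg_sub a 1, neg_div_neg_eq]
    rw [this, Finset.mul_sum, ← Finset.sum_sub_distrib]
    apply Finset.sum_congr rfl
    intro k _
    rw [← pow_succ' z, hzk, ← pow_succ' a]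
    ring
  have hre : (z * ((z^n - 1)/(z-1))).re ≤ a * ((1 + a^n)/D) := by
    refine (Complex.re_le_norm _).trans ?_
    rw [norm_mul, norm_div, hzn, ← hD]
    gcongr
    refine (norm_sub_le _ _).trans ?_
    rw [norm_pow, hzn, norm_one]; linarith
  have hDsq : D^2 = A^2 + 2*a*(1 - Real.cos θ) := by
    rw [hD, Complex.sq_norm, Complex.normSq_apply]
    have e1 : (z - 1).re = a * Real.cos θ - 1 := by
      simp [hz, Complex.exp_ofReal_mul_I_re]
    have e2 : (z - 1).im = a * Real.sin θ := by
      simp [hz, Complex.exp_ofReal_mul_I_im]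
    rw [e1, e2, hA]
    nlinarith [Real.sin_sq_add_cos_sq θ]
  set m := min 1 (θ^2/(Real.pi^2 * t^2)) with hm
  have hpi := Real.pi_pos
  have hm0 : 0 ≤ m := le_min zero_le_one (by positivity)
  have hm1 : m ≤ 1 := min_le_left _ _
  have hmB : A^2 * m ≤ 2*a*(1 - Real.cos θ) := by
    have hcos := Real.cos_le_one_sub_mul_cos_sq hθ
    calc A^2 * m ≤ t^2 * (θ^2/(Real.pi^2 * t^2)) := by
          gcongr
          exact min_le_right _ _
      _ = 2 * (1/4) * (2 / Real.pi^2 * θ^2) := by field_simp; norm_num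
      _ ≤ 2*a*(1 - Real.cos θ) := by
          gcongr
          linarith
  have hAD := min_aux A D m hA0 hD0 hm0 hm1 (by rw [hDsq]; linarith)
  rw [hS]
  have hpow : 0 ≤ a^n := by positivity
  have hmain : 1/(16*t) * m ≤ a / A * (1 - A / D) := by
    have h1 : 1/(4*t) ≤ a / A := by
      rw [div_le_div_iff₀ (by positivity) hA0]
      nlinarith
    calc 1/(16*t) * m = 1/(4*t) * (m/4) := by ring
      _ ≤ a / A * (1 - A/D) := by
        gcongr
        linarith
  have haD : a / D ≤ 1/t := le_trans (by gcongr) haA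
  have e1 : a * ((1 - a^n)/A) = a/A - a^n * (a/A) := by ring
  have e2 : a * ((1 + a^n)/D) = a/D + a^n * (a/D) := by ring
  have e3 : a / A * (1 - A/D) = a/A - a/D := by field_simp
  have e4 : a^n * (a/A) ≤ a^n * (1/t) := by gcongr
  have e5 : a^n * (a/D) ≤ a^n * (1/t) := by gcongr
  have e6 : 2 * a^n / t = a^n*(1/t) + a^n*(1/t) := by ring
  rw [e6]
  linarith

lemma ww_eq (n : ℕ) (u : ℝ) : ww n u = ((c / rr n ^ 2 : ℝ) : ℂ) - ((u / rr n ^ 3 : ℝ) : ℂ) * Complex.I := by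
  apply Complex.ext
  · simp only [ww, Complex.sub_re, Complex.ofReal_re, Complex.re_ofReal_mul, Complex.I_re]; ring
  · simp only [ww, Complex.sub_im, Complex.ofReal_im, Complex.im_ofReal_mul, Complex.I_im]; ring

lemma ww_exp (n : ℕ) (u : ℝ) (k : ℕ) : Complex.exp (-ww n u * (k+1))
    = ((Real.exp (-(c / rr n ^2)) ^ (k+1) : ℝ) : ℂ) * Complex.exp ((((k+1) * (u / rr n ^ 3) : ℝ)) * Complex.I) := by
  rw [← Real.exp_nat_mul, Complex.ofReal_exp, ← Complex.exp_add]
  congr 1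
  rw [ww_eq]
  push_cast
  ring

lemma G_norm (n : ℕ) (hn : 1 ≤ n) (u : ℝ) : ‖G n u‖ =
    (∏ k ∈ Finset.range n, ‖1 + ((Real.exp (-(c / rr n ^2)) ^ (k+1) : ℝ) : ℂ) * Complex.exp ((((k+1) * (u / rr n ^ 3) : ℝ)) * Complex.I)‖)
      * Real.exp (-(c * rr n ^ 2)) := by
  unfold G
  rw [norm_mul, norm_mul, norm_prod]
  simp_rw [ww_exp]
  rw [mul_assoc]
  congr 1
  rw [Complex.norm_exp, Complex.norm_exp, ← Real.exp_add]
  congr 1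
  have hp : 0 < rr n := by linarith [one_le_rr n hn]
  have h1 : ((n:ℂ) * ww n u).re = c * rr n ^ 2 := by
    have : ((n:ℂ) * ww n u).re = n * (c / rr n ^2) := by simp [ww]
    rw [this, ← rr_pow]; field_simp
  have h2 : (-(2 * (c:ℂ) * rr n ^ 2)).re = -(2 * c * rr n ^2) := by
    rw [show (-(2 * (c:ℂ) * rr n ^ 2)) = ((-(2 * c * rr n ^2) : ℝ) : ℂ) by push_cast; rfl, Complex.ofReal_re]
  rw [h1, h2]; ring

lemma G_dom1 (n : ℕ) (hn : 1 ≤ n) (u : ℝ) (hu : |u| ≤ Real.pi * rr n ^ 3) : ‖G n u‖ ≤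
    ‖G n 0‖ * Real.exp (1/(2*c^2)) * Real.exp (-(1/(64*Real.pi^2) * min (rr n ^ 2) (u^2))) := by
  have hr := one_le_rr n hn
  have hp : 0 < rr n := by linarith
  have hc := c_pos
  have hc1 := c_le_one
  have hpi := Real.pi_pos
  rw [G_norm n hn u, G_norm n hn 0]
  set t := c / rr n ^ 2 with ht
  set θ := u / rr n ^ 3 with hθ
  have ht0 : 0 < t := by positivity
  have ht1 : t ≤ 1 := by
    rw [ht, div_le_one (by positivity)]; nlinarith
  have ha1 : Real.exp (-t) ≤ 1 := by rw [Real.exp_le_one_iff]; linarith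
  have hS := S_bound t θ n ht0 ht1 (by
    rw [hθ, abs_div, abs_of_pos (pow_pos hp 3), div_le_iff₀ (by positivity)]; exact hu)
  have h1 : (∏ k ∈ Finset.range n, ‖1 + ((Real.exp (-t) ^ (k+1) : ℝ) : ℂ) * Complex.exp ((((k+1) * θ : ℝ)) * Complex.I)‖)
      ≤ (∏ k ∈ Finset.range n, ‖1 + ((Real.exp (-t) ^ (k+1) : ℝ) : ℂ) * Complex.exp ((((k+1) * (0 / rr n ^ 3) : ℝ)) * Complex.I)‖)
        * Real.exp (-(∑ k ∈ Finset.range n, Real.exp (-t)^(k+1) * (1 - Real.cos ((k+1)*θ)))/4) := by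
    rw [← Finset.sum_neg_distrib, Finset.sum_div, Real.exp_sum, ← Finset.prod_mul_distrib]
    apply Finset.prod_le_prod
    · intros; positivity
    · intro k _
      refine (factor_bound _ _ (by positivity) (pow_le_one₀ (Real.exp_pos _).le ha1)).trans (le_of_eq ?_)
      congr 1
      simp only [zero_div, mul_zero, Complex.ofReal_zero, zero_mul, Complex.exp_zero, mul_one]
      rw [← Complex.ofReal_one, ← Complex.ofReal_add, Complex.norm_real, Real.norm_of_nonneg (by positivity)]
  have h2 : Real.exp (-(∑ k ∈ Finset.range n, Real.exp (-t)^(k+1) * (1 - Real.cos ((k+1)*θ)))/4)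
      ≤ Real.exp (1/(2*c^2)) * Real.exp (-(1/(64*Real.pi^2) * min (rr n ^ 2) (u^2))) := by
    rw [← Real.exp_add, Real.exp_le_exp]
    have h3 : 2 * Real.exp (-t)^n / t ≤ 2/c^2 := by
      rw [← Real.exp_nat_mul]
      have e : (n:ℝ) * -t = -(c * rr n ^ 2) := by
        rw [ht, ← rr_pow]; field_simp
      rw [e, Real.exp_neg, div_le_div_iff₀ ht0 (by positivity)]
      have h5 := Real.add_one_le_exp (c * rr n ^ 2)
      have h6 : (Real.exp (c * rr n ^ 2))⁻¹ * (c * rr n ^2) ≤ 1 := by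
        rw [inv_mul_le_iff₀ (Real.exp_pos _)]; linarith
      have e7 : 2 * (Real.exp (c * rr n ^ 2))⁻¹ * c^2 = 2 * t * ((Real.exp (c * rr n ^ 2))⁻¹ * (c * rr n ^2)) := by
        rw [ht]; field_simp
      rw [e7]
      nlinarith
    have h4 : 1/(16*Real.pi^2) * min (rr n ^ 2) (u^2) ≤ 1/(16*t) * min 1 (θ^2/(Real.pi^2 * t^2)) := by
      have e1 : 1/(16*t) = rr n ^ 2 / (16 * c) := by rw [ht]; field_simp
      rw [e1, mul_min_of_nonneg _ _ (by positivity), mul_min_of_nonneg _ _ (by positivity)]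
      have hpi3 := Real.pi_gt_three
      apply min_le_min
      · rw [mul_one, mul_comm, mul_one_div, div_le_div_iff₀ (by positivity) (by positivity)]
        have : 16 * c ≤ 16 * Real.pi^2 := by nlinarith
        nlinarith [sq_nonneg (rr n)]
      · have e2 : rr n ^ 2 / (16 * c) * (θ^2/(Real.pi^2 * t^2)) = 1/(16*Real.pi^2) * u^2 * (1/c^3) := by
          rw [hθ, ht]; field_simp
        rw [e2]
        apply le_mul_of_one_le_right (by positivity)
        rw [le_div_iff₀ (by positivity), one_mul]
        exact pow_le_one₀ hc.le hc1
    have e8 : 1/(64*Real.pi^2) * min (rr n ^ 2) (u^2) = (1/(16*Real.pi^2) * min (rr n ^ 2) (u^2))/4 := by ring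
    have e9 : 1/(2*c^2) = (2/c^2)/4 := by ring
    rw [e8, e9]
    linarith
  calc _ ≤ _ := mul_le_mul_of_nonneg_right (h1.trans (mul_le_mul_of_nonneg_left h2 (by positivity))) (Real.exp_pos _).le
    _ = _ := by ring

lemma G_dom : ∃ K : ℝ, ∀ n : ℕ, 1 ≤ n → ∀ u : ℝ, |u| ≤ Real.pi * rr n ^ 3 → ‖G n u‖ ≤ K * (1 + u^2)⁻¹ := by
  obtain ⟨K0, hK0⟩ := (G_tendsto 0).norm.bddAbove_range
  have hK : ∀ n, ‖G n 0‖ ≤ K0 := fun n => hK0 ⟨n, rfl⟩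
  have hK00 : 0 ≤ K0 := (norm_nonneg _).trans (hK 0)
  have hpi := Real.pi_pos
  set κ : ℝ := 1/(64*Real.pi^2) with hκ
  have hκ0 : 0 < κ := by positivity
  refine ⟨K0 * Real.exp (1/(2*c^2)) * (1 + 1/κ + 6*Real.pi^2/κ^3), fun n hn u hu => ?_⟩
  refine (G_dom1 n hn u hu).trans ?_
  rw [mul_assoc _ _ (1+u^2)⁻¹]
  have hr := one_le_rr n hn
  gcongr
  · exact hK n
  · rw [← div_eq_mul_inv, le_div_iff₀ (by positivity), Real.exp_neg, inv_mul_le_iff₀ (Real.exp_pos _)]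
    have h6 : 0 ≤ 6*Real.pi^2/κ^3 := by positivity
    have h7 : 0 ≤ 1/κ := by positivity
    rcases le_total (rr n ^ 2) (u^2) with h | h
    · rw [min_eq_left h]
      have hx : 0 ≤ κ * rr n ^ 2 := by positivity
      have h1 := Real.pow_div_factorial_le_exp _ hx 3
      have h2 := Real.one_le_exp hx
      have h3 : u^2 ≤ Real.pi^2 * (rr n ^ 2)^3 := by
        calc u^2 = |u|^2 := (sq_abs u).symm
          _ ≤ (Real.pi * rr n ^ 3)^2 := by gcongr
          _ = _ := by ring
      have h4 : u^2 ≤ 6*Real.pi^2/κ^3 * Real.exp (κ * rr n ^ 2) := by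
        calc u^2 ≤ Real.pi^2 * (rr n ^ 2)^3 := h3
          _ = 6*Real.pi^2/κ^3 * ((κ * rr n ^ 2)^3 / (Nat.factorial 3)) := by
            simp only [Nat.factorial]; field_simp; norm_num
          _ ≤ _ := by gcongr
      nlinarith
    · rw [min_eq_right h]
      have hx : 0 ≤ κ * u^2 := by positivity
      have h1 := Real.add_one_le_exp (κ * u^2)
      have h2 := Real.one_le_exp hx
      have h4 : u^2 ≤ 1/κ * Real.exp (κ * u^2) := by
        calc u^2 = 1/κ * (κ * u^2) := by field_simp
          _ ≤ _ := by gcongr; linarith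
      nlinarith


lemma qd_eq (n : ℕ) : qd n = ((Finset.Icc 1 n).powerset.filter (fun S => ∑ i ∈ S, i = n)).card := by
  unfold qd
  refine Finset.card_bij' (fun p _ => p.parts.toFinset)
    (fun S hS => ⟨S.val, fun {i} hi => ?_, ?_⟩) ?_ ?_ ?_ ?_
  · simp only [Finset.mem_filter, Finset.mem_powerset] at hS
    exact (Finset.mem_Icc.1 (hS.1 hi)).1
  · simp only [Finset.mem_filter, Finset.mem_powerset] at hS
    rw [← hS.2, Finset.sum_val]
    rfl
  · intro p hp
    simp only [Nat.Partition.distincts, Finset.mem_filter, Finset.mem_univ, true_and] at hp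
    simp only [Finset.mem_filter, Finset.mem_powerset]
    constructor
    · intro i hi
      rw [Multiset.mem_toFinset] at hi
      exact Finset.mem_Icc.2 ⟨p.parts_pos hi, Nat.Partition.le_of_mem_parts hi⟩
    · have := p.parts_sum
      simp only [Finset.sum, Multiset.toFinset_val, hp.dedup]
      simpa using this
  · intro S hS
    simp only [Nat.Partition.distincts, Finset.mem_filter, Finset.mem_univ, true_and]
    exact S.nodup
  · intro p hp
    simp only [Nat.Partition.distincts, Finset.mem_filter, Finset.mem_univ, true_and] at hp
    ext1
    simp [hp.dedup]
  · intro S hS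
    simp

lemma int_one (n m : ℕ) (hn : 1 ≤ n) : ∫ u in (-(Real.pi * rr n ^ 3))..(Real.pi * rr n ^ 3),
    Complex.exp (((n:ℂ) - m) * ww n u) = if m = n then ((2 * Real.pi * rr n ^ 3 : ℝ) : ℂ) else 0 := by
  have hp : 0 < rr n := by linarith [one_le_rr n hn]
  have hrc : (rr n:ℂ) ≠ 0 := by exact_mod_cast hp.ne'
  split_ifs with h
  · subst h
    simp only [sub_self, zero_mul, Complex.exp_zero, intervalIntegral.integral_const]
    rw [Complex.real_smul, mul_one]
    congr 1; ring
  · have hd : ((n:ℂ) - m) ≠ 0 := by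
      rw [sub_ne_zero]; exact_mod_cast Ne.symm h
    set a : ℂ := -(((n:ℂ) - m) * Complex.I / (rr n : ℂ)^3) with ha
    have ha0 : a ≠ 0 := by
      rw [ha, neg_ne_zero]
      exact div_ne_zero (mul_ne_zero hd Complex.I_ne_zero) (pow_ne_zero _ hrc)
    have e : ∀ u : ℝ, Complex.exp (((n:ℂ) - m) * ww n u)
        = Complex.exp (((n:ℂ) - m) * ((c / rr n ^ 2 : ℝ) : ℂ)) * Complex.exp (a * u) := by
      intro u
      rw [← Complex.exp_add, ww_eq, ha]
      congr 1
      push_cast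
      ring
    simp_rw [e]
    rw [intervalIntegral.integral_const_mul, integral_exp_mul_complex ha0]
    have : Complex.exp (a * ((Real.pi * rr n ^ 3 : ℝ):ℂ)) = Complex.exp (a * ((-(Real.pi * rr n ^ 3) : ℝ):ℂ)) := by
      rw [Complex.exp_eq_exp_iff_exists_int]
      refine ⟨(m:ℤ) - n, ?_⟩
      rw [ha]
      push_cast
      field_simp
      ring
    rw [this]; simp

lemma G_sum (n : ℕ) (u : ℝ) : G n u = ∑ S ∈ (Finset.Icc 1 n).powerset,
    Complex.exp (((n:ℂ) - ((∑ i ∈ S, i : ℕ):ℂ)) * ww n u) * Complex.exp (-(2 * c * rr n ^ 2)) := by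
  unfold G
  have h : ∏ k ∈ Finset.range n, (1 + Complex.exp (-ww n u * (k+1)))
      = ∏ k ∈ Finset.Icc 1 n, (1 + Complex.exp (-ww n u * k)) := by
    rw [Finset.range_eq_Ico]
    rw [show Finset.Icc 1 n = Finset.Ico (0+1) (n+1) by ext; simp]
    rw [← Finset.prod_Ico_add' (fun k : ℕ => (1 + Complex.exp (-ww n u * k))) 0 n 1]
    simp
  rw [h, Finset.prod_one_add, ← Finset.sum_mul]
  congr 1
  rw [Finset.sum_mul]
  apply Finset.sum_congr rfl
  intro S _
  rw [← Complex.exp_sum, ← Complex.exp_add]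
  congr 1
  rw [← Finset.mul_sum]
  push_cast
  ring

lemma ww_cont (n : ℕ) : Continuous (fun u => ww n u) := by
  simp_rw [ww_eq]
  fun_prop

lemma G_cont (n : ℕ) : Continuous (fun u => G n u) := by
  have := ww_cont n
  unfold G
  fun_prop

lemma G_int (n : ℕ) (hn : 1 ≤ n) : ∫ u in (-(Real.pi * rr n ^ 3))..(Real.pi * rr n ^ 3), G n u
    = (((qd n : ℝ) * (2 * Real.pi * rr n ^ 3) * Real.exp (-(2 * c * rr n ^ 2)) : ℝ) : ℂ) := by
  have := ww_cont n
  simp_rw [G_sum]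
  rw [intervalIntegral.integral_finsetSum]
  · simp_rw [intervalIntegral.integral_mul_const]
    rw [← Finset.sum_mul]
    simp_rw [int_one n _ hn]
    rw [← Finset.sum_filter, Finset.sum_const, ← qd_eq]
    push_cast
    simp
  · intro S _
    apply Continuous.intervalIntegrable
    fun_prop

theorem stmt_18 :
    Tendsto (fun E : ℕ =>
        (qd E : ℝ) * 4 * (3 : ℝ) ^ ((1 : ℝ) / 4) * (E : ℝ) ^ ((3 : ℝ) / 4) *
          Real.exp (-(2 * c * Real.sqrt E)))
      atTop (nhds 1) := by
  have hc := c_pos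
  have hpi := Real.pi_pos
  obtain ⟨K, hK⟩ := G_dom
  set J : ℕ → Set ℝ := fun n => Set.Ioc (-(Real.pi * rr (n+1) ^ 3)) (Real.pi * rr (n+1) ^ 3) with hJ
  have hlim := MeasureTheory.tendsto_integral_of_dominated_convergence
    (μ := MeasureTheory.volume)
    (F := fun (n : ℕ) (u : ℝ) => (J n).indicator (fun u => G (n+1) u) u)
    (f := fun u : ℝ => Complex.exp (-((u:ℂ)^2/c)) * Complex.exp (- (Complex.log 2 / 2)))
    (fun u => K * (1 + u^2)⁻¹)
    (fun n => ((G_cont (n+1)).aestronglyMeasurable.indicator measurableSet_Ioc))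
    (integrable_inv_one_add_sq.const_mul K)
    (by
      intro n
      refine Eventually.of_forall (fun u => ?_)
      have h0 := hK (n+1) (by omega)
      by_cases hu : u ∈ J n
      · rw [Set.indicator_of_mem hu]
        exact h0 u (abs_le.2 ⟨hu.1.le, hu.2⟩)
      · rw [Set.indicator_of_notMem hu, norm_zero]
        have h1 := h0 0 (by
          rw [abs_zero]
          have := rr_nonneg (n+1)
          positivity)
        have h2 : 0 ≤ K := by
          have := (norm_nonneg _).trans h1
          simpa using this
        positivity)
    (by
      refine Eventually.of_forall (fun u => ?_)
      have h1 := (tendsto_add_atTop_iff_nat 1).2 (G_tendsto u)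
      refine h1.congr' ?_
      have h2 := (tendsto_add_atTop_iff_nat 1).2 rr_tendsto
      filter_upwards [h2.eventually_ge_atTop (|u| + 1)] with n hn
      have h3 : u ∈ J n := by
        have h4 : |u| < Real.pi * rr (n+1) ^ 3 := by
          have h5 : 1 ≤ rr (n+1) := one_le_rr _ (by omega)
          have h6 : rr (n+1) ≤ rr (n+1) ^ 3 := le_self_pow₀ h5 (by norm_num)
          have := Real.pi_gt_three
          nlinarith [abs_nonneg u]
        have := abs_lt.1 h4
        exact ⟨this.1, this.2.le⟩
      rw [Set.indicator_of_mem h3])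
  have hI : ∀ n : ℕ, ∫ u, (J n).indicator (fun u => G (n+1) u) u
      = (((qd (n+1) : ℝ) * (2 * Real.pi * rr (n+1) ^ 3) * Real.exp (-(2 * c * rr (n+1) ^ 2)) : ℝ) : ℂ) := by
    intro n
    have := rr_nonneg (n+1)
    have h0 : 0 ≤ Real.pi * rr (n+1) ^ 3 := by positivity
    rw [MeasureTheory.integral_indicator measurableSet_Ioc, ← intervalIntegral.integral_of_le (by linarith),
      G_int (n+1) (by omega)]
  have hL : ∫ u : ℝ, Complex.exp (-((u:ℂ)^2/c)) * Complex.exp (- (Complex.log 2 / 2))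
      = ((Real.sqrt (Real.pi * c) * (Real.sqrt 2)⁻¹ : ℝ) : ℂ) := by
    have e : ∀ u : ℝ, Complex.exp (-((u:ℂ)^2/c)) * Complex.exp (- (Complex.log 2 / 2))
        = ((Real.exp (-(1/c) * u^2) * (Real.sqrt 2)⁻¹ : ℝ) : ℂ) := by
      intro u
      have e2 : (Real.sqrt 2)⁻¹ = Real.exp (-(Real.log 2 / 2)) := by
        rw [Real.exp_neg]
        congr 1
        rw [← Real.log_sqrt (by norm_num), Real.exp_log (by positivity)]
      rw [e2]
      push_cast
      rw [show ((Real.log 2 : ℝ) : ℂ) = Complex.log 2 by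
        rw [Complex.ofReal_log (by norm_num)]; simp]
      congr 2
      ring
    simp_rw [e]
    rw [integral_complex_ofReal, MeasureTheory.integral_mul_const, integral_gaussian]
    congr 4
    field_simp
  simp_rw [hI, hL] at hlim
  have hre := (Complex.continuous_re.tendsto _).comp hlim
  simp only [Function.comp_def, Complex.ofReal_re] at hre
  have hre2 := (tendsto_add_atTop_iff_nat (f := fun n : ℕ => (qd n : ℝ) * (2 * Real.pi * rr n ^ 3) * Real.exp (-(2 * c * rr n ^ 2))) 1).1 hre
  have hfin := hre2.const_mul (4 * (3:ℝ)^((1:ℝ)/4) / (2 * Real.pi))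
  have hone : (4 * (3:ℝ)^((1:ℝ)/4) / (2 * Real.pi)) * (Real.sqrt (Real.pi * c) * (Real.sqrt 2)⁻¹) = 1 := by
    have h3 : (3:ℝ)^((1:ℝ)/4) = Real.sqrt (Real.sqrt 3) := by
      rw [Real.sqrt_eq_rpow, Real.sqrt_eq_rpow, ← Real.rpow_mul (by norm_num)]; norm_num
    have h12 : Real.sqrt 12 = 2 * Real.sqrt 3 := by
      rw [show (12:ℝ) = 2^2 * 3 by norm_num, Real.sqrt_mul (by norm_num), Real.sqrt_sq (by norm_num)]
    have hs3 : Real.sqrt 3 ^ 2 = 3 := Real.sq_sqrt (by norm_num)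
    have hs30 : 0 < Real.sqrt 3 := by positivity
    have hsq : ((4 * (3:ℝ)^((1:ℝ)/4) / (2 * Real.pi)) * (Real.sqrt (Real.pi * c) * (Real.sqrt 2)⁻¹))^2 = 1 := by
      rw [h3, mul_pow, mul_pow, div_pow, mul_pow, mul_pow, inv_pow, Real.sq_sqrt (by positivity),
        Real.sq_sqrt (by positivity), Real.sq_sqrt (by norm_num)]
      unfold c
      rw [h12]
      field_simp
      norm_num
    have hnn : 0 ≤ (4 * (3:ℝ)^((1:ℝ)/4) / (2 * Real.pi)) * (Real.sqrt (Real.pi * c) * (Real.sqrt 2)⁻¹) := by positivity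
    nlinarith
  rw [hone] at hfin
  refine hfin.congr (fun n => ?_)
  have e1 : (n:ℝ)^((3:ℝ)/4) = rr n ^ 3 := by
    unfold rr
    rw [← Real.rpow_natCast, ← Real.rpow_mul (by positivity)]
    norm_num
  have e2 : Real.sqrt n = rr n ^ 2 := by
    rw [← rr_pow n, show rr n ^ 4 = (rr n ^ 2)^2 by ring, Real.sqrt_sq (by positivity)]
  rw [e1, e2]
  field_simp
  try ring
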